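/- arXiv:0803.4392 — 3 statements merged into one kernel-verified Lean document; each statement's English description precedes it below -/
import Mathlib

section
/- Let (n_k) be an increasing sequence of positive integers such that n_k divides n_{k+1} for every k. Then for every f ∈ L¹(𝕋) and every λ > 0, the Lebesgue measure of {x ∈ 𝕋 : sup_k R_{n_k}|f|(x) > λ} is at most (1/λ)·‖f‖_{L¹}. -/
open MeasureTheory Filter Set

/-- The circle `𝕋 = ℝ/ℤ` with its Lebesgue (Haar) probability measure. -/
abbrev Circle1 := AddCircle (1 : ℝ)

/-- The Riemann sum operator `R_n f(x) = (1/n) ∑_{k=0}^{n-1} f(x + k/n)`. -/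
noncomputable def RiemannSum (n : ℕ) (f : Circle1 → ℝ) (x : Circle1) : ℝ :=
  (n : ℝ)⁻¹ * ∑ k ∈ Finset.range n, f (x + (((k : ℝ) / (n : ℝ) : ℝ) : Circle1))

lemma RiemannSum_step (n : ℕ) (hn : 1 ≤ n) (g : Circle1 → ℝ) (x : Circle1) :
    RiemannSum n g (x + (((1 : ℝ) / (n : ℝ) : ℝ) : Circle1)) = RiemannSum n g x := by
  have hn0 : (n : ℝ) ≠ 0 := by positivity
  unfold RiemannSum
  congr 1
  have h1 := Finset.sum_range_succ (fun k : ℕ => g (x + (((k : ℝ) / (n : ℝ) : ℝ) : Circle1))) n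
  have h2 := Finset.sum_range_succ' (fun k : ℕ => g (x + (((k : ℝ) / (n : ℝ) : ℝ) : Circle1))) n
  have h3 : (((n : ℝ) / (n : ℝ) : ℝ) : Circle1) = 0 := by
    rw [div_self hn0]; exact AddCircle.coe_period 1
  have h4 : ((((0 : ℕ) : ℝ) / (n : ℝ) : ℝ) : Circle1) = 0 := by simp
  rw [h1] at h2
  simp only [h3, h4] at h2
  rw [add_left_inj] at h2
  rw [h2]
  refine Finset.sum_congr rfl fun k _ => ?_
  rw [add_assoc, ← AddCircle.coe_add]
  congr 4
  push_cast
  ring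

lemma RiemannSum_inv (n : ℕ) (hn : 1 ≤ n) (g : Circle1 → ℝ) (k : ℕ) (x : Circle1) :
    RiemannSum n g (x + (((k : ℝ) / (n : ℝ) : ℝ) : Circle1)) = RiemannSum n g x := by
  induction k with
  | zero => simp
  | succ k ih =>
    rw [← ih, ← RiemannSum_step n hn g (x + (((k : ℝ) / (n : ℝ) : ℝ) : Circle1)), add_assoc, ← AddCircle.coe_add]
    congr 3
    push_cast
    ring

lemma RiemannSum_inv_dvd (n m : ℕ) (hn : 1 ≤ n) (hm : 1 ≤ m) (h : n ∣ m) (g : Circle1 → ℝ)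
    (k : ℕ) (x : Circle1) :
    RiemannSum m g (x + (((k : ℝ) / (n : ℝ) : ℝ) : Circle1)) = RiemannSum m g x := by
  obtain ⟨d, rfl⟩ := h
  rw [← RiemannSum_inv (n * d) hm g (k * d) x]
  have hd : (d : ℝ) ≠ 0 := by
    rintro h
    have : d = 0 := by exact_mod_cast h
    simp [this] at hm
  congr 3
  push_cast
  rw [mul_div_mul_right _ _ hd]

lemma RiemannSum_aemeasurable (n : ℕ) (g : Circle1 → ℝ) (hg : AEMeasurable g volume) :
    AEMeasurable (RiemannSum n g) volume := by
  unfold RiemannSum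
  refine AEMeasurable.const_mul ?_ _
  refine Finset.aemeasurable_fun_sum _ fun k _ => ?_
  exact hg.comp_quasiMeasurePreserving
    (measurePreserving_add_right volume _).quasiMeasurePreserving

lemma jessen_single (n : ℕ) (hn : 1 ≤ n) (g : Circle1 → ℝ) (hg : AEMeasurable g volume)
    (hg0 : ∀ x, 0 ≤ g x) (lam : ℝ) (A : Set Circle1)
    (hA : NullMeasurableSet A volume)
    (hinv : ∀ (k : ℕ) (x : Circle1), x + (((k : ℝ) / (n : ℝ) : ℝ) : Circle1) ∈ A ↔ x ∈ A)
    (hlt : ∀ x ∈ A, lam < RiemannSum n g x) :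
    ENNReal.ofReal lam * volume A ≤ ∫⁻ x in A, ENNReal.ofReal (g x) := by
  have hn0 : (n : ℝ) ≠ 0 := by positivity
  have key : ∀ k : ℕ, ∫⁻ x in A, ENNReal.ofReal (g (x + (((k : ℝ) / (n : ℝ) : ℝ) : Circle1)))
      = ∫⁻ x in A, ENNReal.ofReal (g x) := by
    intro k
    rw [← lintegral_indicator₀ hA, ← lintegral_indicator₀ hA,
      ← lintegral_add_right_eq_self (A.indicator fun x => ENNReal.ofReal (g x))
        (((k : ℝ) / (n : ℝ) : ℝ) : Circle1)]
    refine lintegral_congr fun x => ?_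
    by_cases hx : x ∈ A
    · rw [indicator_of_mem hx, indicator_of_mem ((hinv k x).2 hx)]
    · rw [indicator_of_notMem hx, indicator_of_notMem (fun h => hx ((hinv k x).1 h))]
  have hsum : ∫⁻ x in A, ENNReal.ofReal (RiemannSum n g x) = ∫⁻ x in A, ENNReal.ofReal (g x) := by
    have e : ∀ x, ENNReal.ofReal (RiemannSum n g x) = ENNReal.ofReal ((n : ℝ)⁻¹) *
        ∑ k ∈ Finset.range n, ENNReal.ofReal (g (x + (((k : ℝ) / (n : ℝ) : ℝ) : Circle1))) := by
      intro x
      unfold RiemannSum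
      rw [ENNReal.ofReal_mul (by positivity), ENNReal.ofReal_sum_of_nonneg fun _ _ => hg0 _]
    simp_rw [e]
    rw [lintegral_const_mul' _ _ ENNReal.ofReal_ne_top, lintegral_finsetSum']
    · simp_rw [key]
      rw [Finset.sum_const, Finset.card_range, nsmul_eq_mul, ← mul_assoc,
        ← ENNReal.ofReal_natCast, ← ENNReal.ofReal_mul (by positivity), inv_mul_cancel₀ hn0]
      simp
    · intro k _
      refine AEMeasurable.restrict ?_
      exact (hg.comp_quasiMeasurePreserving
        (measurePreserving_add_right volume _).quasiMeasurePreserving).ennreal_ofReal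
  rw [← hsum, ← setLIntegral_const]
  refine lintegral_mono_ae ((ae_restrict_iff'₀ hA).2 ?_)
  exact Eventually.of_forall fun x hx => ENNReal.ofReal_le_ofReal (hlt x hx).le

lemma jessen_finite (g : Circle1 → ℝ) (hg : AEMeasurable g volume)
    (hg0 : ∀ x, 0 ≤ g x) (lam : ℝ) (K : ℕ) : ∀ (n : ℕ → ℕ) (_ : ∀ k, 1 ≤ n k)
    (_ : ∀ k, n k ∣ n (k + 1)),
    ENNReal.ofReal lam * volume {x : Circle1 | ∃ k, k < K ∧ lam < RiemannSum (n k) g x} ≤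
      ∫⁻ x in {x : Circle1 | ∃ k, k < K ∧ lam < RiemannSum (n k) g x}, ENNReal.ofReal (g x) := by
  induction K with
  | zero => intro n _ _; simp
  | succ K ih =>
    intro n hpos hdvd
    have hE : ∀ m, NullMeasurableSet {x : Circle1 | lam < RiemannSum m g x} volume := fun m =>
      nullMeasurableSet_lt aemeasurable_const (RiemannSum_aemeasurable m g hg)
    have ih' := ih (fun k => n (k + 1)) (fun k => hpos _) (fun k => hdvd _)
    set V : Set Circle1 := {x | ∃ k, k < K ∧ lam < RiemannSum (n (k + 1)) g x} with hV
    set A : Set Circle1 := {x | lam < RiemannSum (n 0) g x} \ V with hAdef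
    have hU : {x : Circle1 | ∃ k, k < K + 1 ∧ lam < RiemannSum (n k) g x} = V ∪ A := by
      ext x
      rw [hAdef, union_sdiff_self]
      constructor
      · rintro ⟨k, hk, hx⟩
        cases k with
        | zero => exact Or.inr hx
        | succ k => exact Or.inl ⟨k, by omega, hx⟩
      · rintro (⟨k, hk, hx⟩ | hx)
        · exact ⟨k + 1, by omega, hx⟩
        · exact ⟨0, by omega, hx⟩
    have hVm : NullMeasurableSet V volume := by
      have : V = ⋃ k, ⋃ (_ : k < K), {x | lam < RiemannSum (n (k + 1)) g x} := by
        ext x; simp [hV]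
      rw [this]
      exact NullMeasurableSet.iUnion fun k => NullMeasurableSet.iUnion fun _ => hE _
    have hAm : NullMeasurableSet A volume := (hE _).diff hVm
    have hd0 : ∀ k, n 0 ∣ n k := by
      intro k
      induction k with
      | zero => exact dvd_rfl
      | succ k ih => exact ih.trans (hdvd k)
    have hinv : ∀ (k : ℕ) (x : Circle1),
        x + (((k : ℝ) / (n 0 : ℝ) : ℝ) : Circle1) ∈ A ↔ x ∈ A := by
      intro k x
      have := fun j => RiemannSum_inv_dvd (n 0) (n j) (hpos 0) (hpos j) (hd0 j) g k x
      simp only [hAdef, hV, Set.mem_sdiff, mem_ofPred_eq, this]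
    have hA := jessen_single (n 0) (hpos 0) g hg hg0 lam A hAm hinv (fun x hx => hx.1)
    rw [hU, Measure.restrict_union₀ (disjoint_sdiff_right.aedisjoint) hAm, lintegral_add_measure]
    calc _ ≤ ENNReal.ofReal lam * (volume V + volume A) := by
            gcongr; exact measure_union_le _ _
      _ = _ := mul_add _ _ _
      _ ≤ _ := add_le_add ih' hA

/-- **Jessen's theorem (maximal inequality).** If `(n k)` is an increasing sequence of
positive integers with `n k ∣ n (k+1)` for all `k`, then for every `f ∈ L¹(𝕋)` and every
`λ > 0`, the measure of `{x : sup_k R_{n k}|f|(x) > λ}` is at most `‖f‖_{L¹}/λ`. -/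
theorem jessen_maximal_inequality
    (n : ℕ → ℕ) (hpos : ∀ k, 1 ≤ n k) (hmono : StrictMono n)
    (hdvd : ∀ k, n k ∣ n (k + 1))
    (f : Circle1 → ℝ) (hf : Integrable f volume) (lam : ℝ) (hlam : 0 < lam) :
    volume {x : Circle1 | ∃ k, lam < RiemannSum (n k) (fun y => |f y|) x} ≤
      ENNReal.ofReal (lam⁻¹ * ∫ y, |f y|) := by
  have hg : AEMeasurable (fun y => |f y|) volume := hf.abs.aemeasurable
  have hfin := fun K => (jessen_finite (fun y => |f y|) hg (fun _ => abs_nonneg _) lam K n hpos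
    hdvd).trans (setLIntegral_le_lintegral _ _)
  have hI : ∫⁻ x, ENNReal.ofReal |f x| = ENNReal.ofReal (∫ y, |f y|) :=
    (ofReal_integral_eq_lintegral_ofReal hf.abs (Eventually.of_forall fun _ => abs_nonneg _)).symm
  rw [ENNReal.ofReal_mul (by positivity), ENNReal.ofReal_inv_of_pos hlam, ← hI]
  have hU : {x : Circle1 | ∃ k, lam < RiemannSum (n k) (fun y => |f y|) x} =
      ⋃ K : ℕ, {x : Circle1 | ∃ k, k < K ∧ lam < RiemannSum (n k) (fun y => |f y|) x} := by
    ext x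
    simp only [mem_ofPred_eq, mem_iUnion]
    exact ⟨fun ⟨k, h⟩ => ⟨k + 1, k, by omega, h⟩, fun ⟨_, k, _, h⟩ => ⟨k, h⟩⟩
  rw [hU, Monotone.measure_iUnion]
  · refine iSup_le fun K => ?_
    rw [mul_comm, ← div_eq_mul_inv, ENNReal.le_div_iff_mul_le
      (Or.inl (by simpa using hlam)) (Or.inl ENNReal.ofReal_ne_top), mul_comm]
    exact hfin K
  · rintro a b hab x ⟨k, hk, hx⟩
    exact ⟨k, by omega, hx⟩
end

section
/- For every l ≥ 1 there exists a bijection τ_l : 𝕋 → 𝕋^∞ such that: (1) τ_l is measure preserving, i.e. λ(τ_l(A)) = |A| for every Lebesgue measurable A ⊆ 𝕋; (2) for every divisor n of l and every t with 0 ≤ t < l/n, the image τ_l(I_l(n,t)) of the Riemann set I_l(n,t) is a rectangle of the form B_m(j_1,…,j_d) with m = l/n. -/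
open MeasureTheory Set

/-- The infinite torus `𝕋^∞ = ∏_{k=1}^∞ 𝕋`. -/
abbrev Tinf := ℕ → Circle1

/-- `nthPrime k` is the `(k+1)`-st prime: `nthPrime 0 = 2 = p_1`, … -/
noncomputable def nthPrime (k : ℕ) : ℕ := Nat.nth Nat.Prime k

/-- The arc `[a, b) ⊆ 𝕋`. -/
def circleIco (a b : ℝ) : Set Circle1 := (fun r : ℝ => (r : Circle1)) '' Set.Ico a b

/-- The rectangle `B_m(j_1,…,j_d)` in `𝕋^∞`, where `m = p_1^{L_1} ⋯ p_d^{L_d}`. -/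
def Rect (d : ℕ) (L j : Fin d → ℕ) : Set Tinf :=
  {x | ∀ k : Fin d,
    x k.val ∈ circleIco ((j k : ℝ) / ((nthPrime k.val ^ L k : ℕ) : ℝ))
      (((j k : ℝ) + 1) / ((nthPrime k.val ^ L k : ℕ) : ℝ))}

/-- The Riemann set `I_l(n,t) = ⋃_{i=0}^{n-1} [t/l + i/n, (t+1)/l + i/n) ⊆ 𝕋`. -/
def RiemannSet (l n t : ℕ) : Set Circle1 :=
  ⋃ i ∈ Finset.range n,
    (fun r : ℝ => (r : Circle1)) ''
      Set.Ico ((t : ℝ) / l + (i : ℝ) / n) (((t : ℝ) + 1) / l + (i : ℝ) / n)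

/-- `μ` is the product Lebesgue probability measure on `𝕋^∞`: it is a probability
measure giving each finite-dimensional cylinder its product measure. -/
def IsProductLebesgue (μ : Measure Tinf) : Prop :=
  IsProbabilityMeasure μ ∧
    ∀ (s : Finset ℕ) (A : ℕ → Set Circle1), (∀ i, MeasurableSet (A i)) →
      μ {x | ∀ i ∈ s, x i ∈ A i} = ∏ i ∈ s, volume (A i)

section Comb

noncomputable def rep (x : Circle1) : ℝ := (AddCircle.measurableEquivIco (1:ℝ) 0 x : ℝ)

theorem measurable_rep : Measurable rep :=
  measurable_subtype_coe.comp (AddCircle.measurableEquivIco (1:ℝ) 0).measurable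

theorem rep_mem (x : Circle1) : rep x ∈ Ico (0:ℝ) 1 := by
  have := (AddCircle.measurableEquivIco (1:ℝ) 0 x).2
  simpa [rep] using this

theorem coe_rep (x : Circle1) : (rep x : Circle1) = x :=
  (AddCircle.equivIco (1:ℝ) 0).symm_apply_apply x

theorem rep_coe {r : ℝ} (hr : r ∈ Ico (0:ℝ) 1) : rep (r : Circle1) = r := by
  have h := AddCircle.coe_equivIco_mk_apply (𝕜 := ℝ) 1 r
  have h2 : rep (r : Circle1) = Int.fract (r / 1) * 1 := h
  rw [h2, div_one, mul_one]
  exact Int.fract_eq_self.2 hr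

theorem mem_arc {a b : ℝ} (ha : 0 ≤ a) (hb : b ≤ 1) (x : Circle1) :
    x ∈ (fun r : ℝ => (r : Circle1)) '' Set.Ico a b ↔ rep x ∈ Ico a b := by
  constructor
  · rintro ⟨r, hr, rfl⟩
    have : r ∈ Ico (0:ℝ) 1 := ⟨ha.trans hr.1, hr.2.trans_le hb⟩
    simpa only [rep_coe this] using hr
  · intro h
    exact ⟨rep x, h, coe_rep x⟩

theorem volume_rep {a b : ℝ} (ha : 0 ≤ a) (hb : b ≤ 1) :
    volume {x : Circle1 | rep x ∈ Ico a b} = ENNReal.ofReal (b - a) := by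
  have hm : MeasurableSet {x : Circle1 | rep x ∈ Ico a b} := measurable_rep measurableSet_Ico
  have hp := AddCircle.measurePreserving_mk (1:ℝ) 0
  rw [← hp.measure_preimage hm.nullMeasurableSet, zero_add,
    ← Measure.restrict_congr_set (Ico_ae_eq_Ioc (μ := volume) (a := (0:ℝ)) (b := 1)),
    Measure.restrict_apply (hp.measurable hm), ← Real.volume_Ico]
  congr 1
  ext r
  simp only [mem_inter_iff, mem_preimage, mem_ofPred_eq]
  constructor
  · rintro ⟨h1, h2⟩
    have := rep_coe h2
    change rep (r : Circle1) ∈ _ at h1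
    rwa [this] at h1
  · intro h
    have h2 : r ∈ Ico (0:ℝ) 1 := ⟨ha.trans h.1, h.2.trans_le hb⟩
    refine ⟨?_, h2⟩
    change rep (r : Circle1) ∈ _
    rwa [rep_coe h2]

theorem volume_singleton_circle (x : Circle1) : volume ({x} : Set Circle1) = 0 := by
  have hp := AddCircle.measurePreserving_mk (1:ℝ) 0
  rw [← hp.measure_preimage (measurableSet_singleton x).nullMeasurableSet,  zero_add,
    ← Measure.restrict_congr_set (Ico_ae_eq_Ioc (μ := volume) (a := (0:ℝ)) (b := 1)),
    Measure.restrict_apply (hp.measurable (measurableSet_singleton x))]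
  refine measure_mono_null (t := {rep x}) ?_ (by simp)
  rintro r ⟨h1, h2⟩
  have h1' : (r : Circle1) = x := h1
  rw [← h1', rep_coe h2]; rfl

/-- Index of the arc of length `1/q` containing `x`. -/
noncomputable def fl (q : ℕ) (x : Circle1) : ℕ := ⌊(q : ℝ) * rep x⌋₊

theorem measurable_fl (q : ℕ) : Measurable (fl q) :=
  Nat.measurable_floor.comp (measurable_rep.const_mul _)

theorem fl_lt {q : ℕ} (hq : 0 < q) (x : Circle1) : fl q x < q := by
  have h := rep_mem x
  have hq' : (0:ℝ) < q := by exact_mod_cast hq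
  rw [fl, Nat.floor_lt (by have := h.1; positivity)]
  nlinarith [h.2]

theorem fl_eq_iff {q : ℕ} (hq : 0 < q) (x : Circle1) (j : ℕ) :
    fl q x = j ↔ rep x ∈ Ico ((j:ℝ) / q) (((j:ℝ) + 1) / q) := by
  have h := rep_mem x
  have hq' : (0:ℝ) < q := by exact_mod_cast hq
  rw [fl, Nat.floor_eq_iff (by have := h.1; positivity), mem_Ico, div_le_iff₀ hq', lt_div_iff₀ hq',
    mul_comm]

theorem mem_circleIco_iff {q : ℕ} (hq : 0 < q) (x : Circle1) {j : ℕ} (hj : j < q) :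
    x ∈ circleIco ((j:ℝ) / q) (((j:ℝ) + 1) / q) ↔ fl q x = j := by
  have hq' : (0:ℝ) < q := by exact_mod_cast hq
  rw [fl_eq_iff hq, circleIco, mem_arc (by positivity)]
  rw [div_le_one hq']
  exact_mod_cast hj

theorem volume_fl {q : ℕ} (hq : 0 < q) {j : ℕ} (hj : j < q) :
    volume {x : Circle1 | fl q x = j} = (q : ENNReal)⁻¹ := by
  have hq' : (0:ℝ) < q := by exact_mod_cast hq
  simp only [fl_eq_iff hq]
  rw [volume_rep (by positivity) (by rw [div_le_one hq']; exact_mod_cast hj)]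
  rw [← sub_div, add_sub_cancel_left, one_div, ENNReal.ofReal_inv_of_pos hq', ENNReal.ofReal_natCast]

theorem fl_div {q r : ℕ} (hr : 0 < r) (x : Circle1) : fl (q * r) x / r = fl q x := by
  have hr' : (r:ℝ) ≠ 0 := by positivity
  rw [fl, fl, ← Nat.floor_div_natCast]
  congr 1
  push_cast
  field_simp

theorem mem_riemannSet_iff {l n t : ℕ} (hl : 1 ≤ l) (hn : n ∣ l) (ht : t < l / n) (x : Circle1) :
    x ∈ RiemannSet l n t ↔ fl l x % (l / n) = t := by
  obtain ⟨m, rfl⟩ := hn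
  have hn0 : 0 < n := Nat.pos_of_ne_zero (by rintro rfl; simp at hl)
  have hm0 : 0 < m := Nat.pos_of_ne_zero (by rintro rfl; simp at hl)
  rw [Nat.mul_div_cancel_left _ hn0] at ht ⊢
  have hn' : (n:ℝ) ≠ 0 := by positivity
  have hm' : (m:ℝ) ≠ 0 := by positivity
  have key : ∀ i ∈ Finset.range n, (x ∈ (fun r : ℝ => (r : Circle1)) ''
      Set.Ico ((t : ℝ) / (n * m : ℕ) + (i : ℝ) / n) (((t : ℝ) + 1) / (n * m : ℕ) + (i : ℝ) / n)
      ↔ fl (n * m) x = t + i * m) := by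
    intro i hi
    have hi' : i + 1 ≤ n := Finset.mem_range.1 hi
    have hlt : t + i * m < n * m := by nlinarith
    rw [← mem_circleIco_iff (Nat.mul_pos hn0 hm0) x hlt, circleIco]
    have e1 : (t : ℝ) / (n * m : ℕ) + (i : ℝ) / n = ((t + i * m : ℕ) : ℝ) / (n * m : ℕ) := by
      push_cast; field_simp
    have e2 : ((t : ℝ) + 1) / (n * m : ℕ) + (i : ℝ) / n
        = (((t + i * m : ℕ) : ℝ) + 1) / (n * m : ℕ) := by
      push_cast; field_simp; ring
    rw [e1, e2]
  simp only [RiemannSet, mem_iUnion, exists_prop]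
  constructor
  · rintro ⟨i, hi, h⟩
    rw [(key i hi).1 h, Nat.add_mul_mod_self_right, Nat.mod_eq_of_lt ht]
  · intro h
    have hlt := fl_lt (Nat.mul_pos hn0 hm0) x
    have hi : fl (n * m) x / m ∈ Finset.range n := by
      rw [Finset.mem_range, Nat.div_lt_iff_lt_mul hm0]; exact hlt
    refine ⟨_, hi, (key _ hi).2 ?_⟩
    rw [← h]
    exact (Nat.mod_add_div' _ _).symm

/-- Reversal of the lowest `M` digits in base `p`. -/
def rev (p : ℕ) : ℕ → ℕ → ℕ
  | 0, _ => 0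
  | M + 1, t => p * rev p M t + t / p ^ M % p

theorem rev_lt {p : ℕ} (hp : 0 < p) (M t : ℕ) : rev p M t < p ^ M := by
  induction M with
  | zero => simp [rev]
  | succ M ih =>
    have := Nat.mod_lt (t / p ^ M) hp
    rw [rev, pow_succ]
    nlinarith

theorem rev_div {p : ℕ} (hp : 0 < p) (M K t : ℕ) : rev p (M + K) t / p ^ K = rev p M t := by
  induction K with
  | zero => simp
  | succ K ih =>
    rw [← Nat.add_assoc, rev, pow_succ, mul_comm (p ^ K), ← Nat.div_div_eq_div_mul,
      Nat.mul_add_div hp, Nat.div_eq_of_lt (Nat.mod_lt _ hp), add_zero, ih]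

theorem rev_eq_iff {p : ℕ} (hp : 0 < p) (M s t : ℕ) :
    rev p M s = rev p M t ↔ s ≡ t [MOD p ^ M] := by
  induction M with
  | zero => simp [rev, Nat.modEq_one]
  | succ M ih =>
    have hs := Nat.mod_lt (s / p ^ M) hp
    have ht := Nat.mod_lt (t / p ^ M) hp
    have hmod : ∀ a, a % p ^ (M + 1) = a % p ^ M + p ^ M * (a / p ^ M % p) := by
      intro a; rw [pow_succ, Nat.mod_mul]
    have h1 : rev p (M + 1) s = rev p (M + 1) t ↔
        rev p M s = rev p M t ∧ s / p ^ M % p = t / p ^ M % p := by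
      constructor
      · intro h
        have h2 : rev p M s = rev p M t := by
          rw [← rev_div hp M 1 s, ← rev_div hp M 1 t, h]
        refine ⟨h2, ?_⟩
        rw [rev, rev, h2] at h
        omega
      · rintro ⟨h, h'⟩
        rw [rev, rev, h, h']
    rw [h1, ih, Nat.ModEq, Nat.ModEq, hmod, hmod]
    constructor
    · rintro ⟨h, h'⟩; rw [h, h']
    · intro h
      have a1 : s % p ^ M = t % p ^ M := by
        have := congrArg (· % p ^ M) h
        simpa using this
      refine ⟨a1, ?_⟩
      rw [a1] at h
      exact Nat.eq_of_mul_eq_mul_left (pow_pos hp M) (Nat.add_left_cancel h)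

theorem nthPrime_prime (k : ℕ) : (nthPrime k).Prime := Nat.prime_nth_prime k

theorem prod_nthPrime {l m : ℕ} (hl : l ≠ 0) (hm : m ∣ l) :
    ∏ k : Fin (l + 1), nthPrime k.val ^ m.factorization (nthPrime k.val) = m := by
  have hm0 : m ≠ 0 := by rintro rfl; exact hl (zero_dvd_iff.1 hm)
  rw [Fin.prod_univ_eq_prod_range (fun k => nthPrime k ^ m.factorization (nthPrime k)) (l + 1)]
  have hinj : Function.Injective nthPrime := Nat.nth_injective Nat.infinite_setOfPred_prime
  rw [← Finset.prod_image (s := Finset.range (l + 1)) (g := nthPrime)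
    (f := fun p => p ^ m.factorization p) (fun a _ b _ h => hinj h)]
  conv_rhs => rw [← Nat.prod_factorization_pow_eq_self hm0]
  rw [Finsupp.prod]
  symm
  apply Finset.prod_subset
  · intro p hp
    have hp' : p.Prime := Nat.prime_of_mem_primeFactors (by simpa using hp)
    have hpd : p ∣ m := Nat.dvd_of_mem_primeFactors (by simpa using hp)
    have hple : p ≤ l := Nat.le_of_dvd (Nat.pos_of_ne_zero hl) (hpd.trans hm)
    rw [Finset.mem_image]
    refine ⟨Nat.count Nat.Prime p, ?_, Nat.nth_count hp'⟩
    rw [Finset.mem_range]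
    have : Nat.count Nat.Prime p ≤ p := Nat.count_le _
    omega
  · intro p _ hp
    rw [Finsupp.notMem_support_iff.1 hp, pow_zero]

theorem modEq_iff_forall {l m : ℕ} (hl : l ≠ 0) (hm : m ∣ l) (s t : ℕ) :
    s ≡ t [MOD m] ↔ ∀ k : Fin (l + 1),
      s ≡ t [MOD nthPrime k.val ^ m.factorization (nthPrime k.val)] := by
  have hinj : Function.Injective nthPrime := Nat.nth_injective Nat.infinite_setOfPred_prime
  have hp := prod_nthPrime hl hm
  constructor
  · intro h k
    refine h.of_dvd ?_
    exact Nat.ordProj_dvd m _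
  · intro h
    rw [← hp]
    simp only [Nat.modEq_iff_dvd] at h ⊢
    push_cast
    refine Finset.prod_dvd_of_coprime ?_ ?_
    · intro i _ j _ hij
      have : Nat.Coprime (nthPrime i.val ^ m.factorization (nthPrime i.val))
          (nthPrime j.val ^ m.factorization (nthPrime j.val)) := by
        apply Nat.Coprime.pow
        rw [Nat.coprime_primes (nthPrime_prime _) (nthPrime_prime _)]
        exact fun h => hij (Fin.ext (hinj h))
      have := Nat.isCoprime_iff_coprime.2 this
      simpa [Function.onFun] using this
    · intro i _
      have := h i
      push_cast at this
      exact this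

end Comb

section Iso

theorem glue_measurable {X Y ι : Type*} [MeasurableSpace X] [MeasurableSpace Y] [Countable ι]
    [MeasurableSpace ι] [MeasurableSingletonClass ι] (a : X → ι) (b : Y → ι)
    (ha : Measurable a)
    (e : ∀ i, (a ⁻¹' {i}) ≃ᵐ (b ⁻¹' {i})) :
    Measurable (fun x => ((e (a x) ⟨x, rfl⟩ : b ⁻¹' {a x}) : Y)) := by
  have key : ∀ i x (h : a x = i), ((e (a x) ⟨x, rfl⟩ : b ⁻¹' {a x}) : Y) = (e i ⟨x, h⟩).val := by
    rintro i x rfl; rfl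
  intro B hB
  have : (fun x => ((e (a x) ⟨x, rfl⟩ : b ⁻¹' {a x}) : Y)) ⁻¹' B
      = ⋃ i, Subtype.val '' (e i ⁻¹' (Subtype.val ⁻¹' B)) := by
    ext x
    simp only [mem_preimage, mem_iUnion, mem_image]
    constructor
    · intro h
      exact ⟨a x, ⟨x, rfl⟩, h, rfl⟩
    · rintro ⟨i, ⟨x', hx'⟩, h, rfl⟩
      change ((e (a x') ⟨x', rfl⟩ : b ⁻¹' {a x'}) : Y) ∈ B
      rw [key i x' hx']
      exact h
  rw [this]
  refine MeasurableSet.iUnion fun i => ?_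
  exact MeasurableSet.subtype_image (ha (measurableSet_singleton i))
    ((e i).measurable (measurable_subtype_coe hB))

theorem glue {X Y ι : Type*} [MeasurableSpace X] [MeasurableSpace Y] [Countable ι]
    [MeasurableSpace ι] [MeasurableSingletonClass ι] (μ : Measure X) (ν : Measure Y)
    (a : X → ι) (b : Y → ι) (ha : Measurable a) (hb : Measurable b)
    (e : ∀ i, (a ⁻¹' {i}) ≃ᵐ (b ⁻¹' {i}))
    (he : ∀ i (A : Set (a ⁻¹' {i})), MeasurableSet A →
      ν (Subtype.val '' (e i '' A)) = μ (Subtype.val '' A)) :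
    ∃ τ : X ≃ᵐ Y, (∀ x, b (τ x) = a x) ∧ ∀ A, MeasurableSet A → ν (τ '' A) = μ A := by
  let f : X → Y := fun x => ((e (a x) ⟨x, rfl⟩ : b ⁻¹' {a x}) : Y)
  let g : Y → X := fun y => (((e (b y)).symm ⟨y, rfl⟩ : a ⁻¹' {b y}) : X)
  have hf : ∀ i x (h : a x = i), f x = (e i ⟨x, h⟩).val := by
    rintro i x rfl; rfl
  have hg : ∀ i y (h : b y = i), g y = ((e i).symm ⟨y, h⟩).val := by
    rintro i x rfl; rfl
  have hbf : ∀ x, b (f x) = a x := fun x => (e (a x) ⟨x, rfl⟩).2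
  have hag : ∀ y, a (g y) = b y := fun y => ((e (b y)).symm ⟨y, rfl⟩).2
  have hgf : ∀ x, g (f x) = x := by
    intro x
    rw [hg (a x) (f x) (hbf x)]
    exact congrArg Subtype.val ((e (a x)).symm_apply_apply ⟨x, rfl⟩)
  have hfg : ∀ x, f (g x) = x := by
    intro x
    rw [hf (b x) (g x) (hag x)]
    exact congrArg Subtype.val ((e (b x)).apply_symm_apply ⟨x, rfl⟩)
  refine ⟨⟨⟨f, g, hgf, hfg⟩, glue_measurable a b ha e,
    glue_measurable b a hb (fun i => (e i).symm)⟩, hbf, ?_⟩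
  intro A hA
  change ν (f '' A) = μ A
  have h1 : f '' A = ⋃ i, Subtype.val '' (e i '' (Subtype.val ⁻¹' A)) := by
    ext y
    simp only [mem_iUnion, mem_image]
    constructor
    · rintro ⟨x, hx, rfl⟩
      exact ⟨a x, _, ⟨⟨x, rfl⟩, hx, rfl⟩, rfl⟩
    · rintro ⟨i, _, ⟨⟨x, hxi⟩, hx, rfl⟩, rfl⟩
      exact ⟨x, hx, hf i x hxi⟩
  have h2 : A = ⋃ i, (Subtype.val '' (Subtype.val ⁻¹' A : Set (a ⁻¹' {i}))) := by
    ext y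
    simp
  have m1 : ∀ i, MeasurableSet (Subtype.val ⁻¹' A : Set (a ⁻¹' {i})) :=
    fun i => measurable_subtype_coe hA
  rw [h1, measure_iUnion]
  · conv_rhs => rw [h2]
    rw [measure_iUnion]
    · exact tsum_congr fun i => he i _ (m1 i)
    · intro i j hij
      refine Set.disjoint_left.2 ?_
      rintro _ ⟨⟨x, hx⟩, _, rfl⟩ ⟨⟨y, hy⟩, _, h⟩
      apply hij
      simp only at h
      subst h
      exact hx.symm.trans hy
    · exact fun i => MeasurableSet.subtype_image (ha (measurableSet_singleton i)) (m1 i)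
  · intro i j hij
    refine Set.disjoint_left.2 ?_
    rintro _ ⟨⟨x, hx⟩, _, rfl⟩ ⟨⟨y, hy⟩, _, h⟩
    apply hij
    simp only at h
    subst h
    exact hx.symm.trans hy
  · exact fun i => MeasurableSet.subtype_image (hb (measurableSet_singleton i))
      ((e i).measurableSet_image.2 (m1 i))

/-- An atomless probability measure on the line is pushed to Lebesgue measure by its cdf. -/
theorem map_cdf_eq (ν : Measure ℝ) [IsProbabilityMeasure ν] (h0 : ∀ x, ν {x} = 0) :
    ν.map (ProbabilityTheory.cdf ν) = volume.restrict (Icc 0 1) := by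
  open ProbabilityTheory in
  have hmono := monotone_cdf ν
  have hcont : Continuous (cdf ν) := by
    rw [continuous_iff_continuousAt]
    intro x
    have hr := (cdf ν).right_continuous x
    rw [continuousAt_iff_continuous_left_right]
    refine ⟨?_, hr⟩
    have hs := (cdf ν).measure_singleton x
    rw [measure_cdf, h0] at hs
    have h3 : Function.leftLim (cdf ν) x = cdf ν x := by
      have := ENNReal.ofReal_eq_zero.1 hs.symm
      exact le_antisymm (hmono.leftLim_le le_rfl) (by linarith)
    have := hmono.continuousWithinAt_Iio_iff_leftLim_eq.2 h3
    exact continuousWithinAt_Iio_iff_Iic.1 this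
  have hsurj : ∀ u ∈ Ioo (0:ℝ) 1, ∃ x, cdf ν x = u := by
    intro u hu
    obtain ⟨x, hx⟩ := ((tendsto_cdf_atBot ν).eventually (gt_mem_nhds hu.1)).exists
    obtain ⟨y, hy⟩ := ((tendsto_cdf_atTop ν).eventually (lt_mem_nhds hu.2)).exists
    obtain ⟨z, hz⟩ := mem_range_of_exists_le_of_exists_ge hcont ⟨x, hx.le⟩ ⟨y, hy.le⟩
    exact ⟨z, hz⟩
  have hm : Measurable (cdf ν) := hcont.measurable
  have : IsProbabilityMeasure (ν.map (cdf ν)) := Measure.isProbabilityMeasure_map hm.aemeasurable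
  refine Measure.ext_of_Iic _ _ fun u => ?_
  rw [Measure.map_apply hm measurableSet_Iic, Measure.restrict_apply measurableSet_Iic]
  -- upper bound for u in [0,1)
  have hup : ∀ u, 0 ≤ u → u < 1 → ν (cdf ν ⁻¹' Iic u) ≤ ENNReal.ofReal u := by
    intro u hu0 hu1
    have : ∀ v ∈ Ioo u 1, ν (cdf ν ⁻¹' Iic u) ≤ ENNReal.ofReal v := by
      intro v hv
      obtain ⟨x, hx⟩ := hsurj v ⟨hu0.trans_lt hv.1, hv.2⟩
      rw [← hx, ofReal_cdf]
      apply measure_mono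
      intro y hy
      by_contra hxy
      have : x ≤ y := (not_le.1 hxy).le
      have := hmono this
      have hy' : cdf ν y ≤ u := hy
      linarith [hv.1]
    have hc : Filter.Tendsto (fun v => ENNReal.ofReal v) (nhdsWithin u (Ioi u))
        (nhds (ENNReal.ofReal u)) :=
      (ENNReal.continuous_ofReal.tendsto u).mono_left nhdsWithin_le_nhds
    refine ge_of_tendsto hc ?_
    filter_upwards [Ioo_mem_nhdsGT hu1] with v hv using this v hv
  rcases lt_or_ge u 0 with hu | hu
  · have e1 : cdf ν ⁻¹' Iic u = ∅ := by
      ext x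
      simp only [mem_preimage, mem_Iic, mem_empty_iff_false, iff_false, not_le]
      exact hu.trans_le (cdf_nonneg ν x)
    have e2 : Iic u ∩ Icc 0 1 = ∅ := by
      ext x
      simp only [mem_inter_iff, mem_Iic, mem_Icc, mem_empty_iff_false, iff_false]
      intro h
      linarith [h.1, h.2.1]
    rw [e1, e2]; simp
  rcases lt_or_ge u 1 with hu1 | hu1
  · have e2 : Iic u ∩ Icc 0 1 = Icc 0 u := by
      ext x
      simp only [mem_inter_iff, mem_Iic, mem_Icc]
      constructor
      · intro h; exact ⟨h.2.1, h.1⟩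
      · intro h; exact ⟨h.2, h.1, h.2.trans hu1.le⟩
    rw [e2, Real.volume_Icc, sub_zero]
    apply le_antisymm (hup u hu hu1)
    rcases hu.eq_or_lt with h | h
    · simp [← h]
    · obtain ⟨x, hx⟩ := hsurj u ⟨h, hu1⟩
      conv_lhs => rw [← hx, ofReal_cdf]
      apply measure_mono
      intro y hy
      change cdf ν y ≤ u
      rw [← hx]
      exact hmono hy
  · have e1 : cdf ν ⁻¹' Iic u = univ := by
      ext x
      simp only [mem_preimage, mem_Iic, mem_univ, iff_true]
      exact (cdf_le_one ν x).trans hu1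
    have e2 : Iic u ∩ Icc (0:ℝ) 1 = Icc 0 1 := by
      ext x
      simp only [mem_inter_iff, mem_Iic, mem_Icc, and_iff_right_iff_imp]
      intro h
      exact h.2.trans hu1
    rw [e1, e2]; simp

theorem exists_null_uncountable {X : Type*} [MeasurableSpace X] [StandardBorelSpace X]
    (μ : Measure X) [IsFiniteMeasure μ] (hX : ¬ Countable X) :
    ∃ Z : Set X, MeasurableSet Z ∧ μ Z = 0 ∧ ¬ Z.Countable := by
  have hR : ¬ Countable ℝ := by
    rw [← Cardinal.mk_le_aleph0_iff, Cardinal.mk_real]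
    exact not_le.2 Cardinal.aleph0_lt_continuum
  have hRR : ¬ Countable (ℝ × ℝ) := by
    intro h
    exact hR (Function.Injective.countable (f := fun x : ℝ => (x, (0:ℝ)))
      (fun x y h => (Prod.mk.inj h).1))
  let φ : X ≃ᵐ ℝ × ℝ := PolishSpace.measurableEquivOfNotCountable hX hRR
  let As : ℝ → Set X := fun r => {x | (φ x).1 = r}
  have hAs : ∀ r, MeasurableSet (As r) := fun r =>
    (measurable_fst.comp φ.measurable) (measurableSet_singleton r)
  have hc := Measure.countable_meas_pos_of_disjoint_iUnion (μ := μ) hAs (by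
    intro i j hij
    refine Set.disjoint_left.2 ?_
    intro x hx hy
    exact hij (hx.symm.trans hy))
  have : ∃ r, ¬ 0 < μ (As r) := by
    by_contra! h
    have h' : {i | 0 < μ (As i)} = univ := eq_univ_of_forall h
    rw [h'] at hc
    exact hR (countable_univ_iff.1 hc)
  obtain ⟨r, hr⟩ := this
  refine ⟨As r, hAs r, by simpa using hr, ?_⟩
  intro hcount
  apply hR
  have := hcount.to_subtype
  refine Function.Injective.countable (f := fun s : ℝ => (⟨φ.symm (r, s), by simp [As]⟩ : As r)) ?_
  intro s t h
  have := congrArg Subtype.val h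
  simpa using this

theorem iso_unit {X : Type*} [MeasurableSpace X] [StandardBorelSpace X]
    (μ : Measure X) [IsProbabilityMeasure μ] (h0 : ∀ x, μ {x} = 0) :
    ∃ τ : X ≃ᵐ ℝ, ∀ A, MeasurableSet A → (volume.restrict (Icc (0:ℝ) 1)) (τ '' A) = μ A := by
  have hX : ¬ Countable X := by
    intro h
    have : μ univ = 0 := by
      rw [← biUnion_of_singleton univ]
      exact (measure_biUnion_null_iff (to_countable _)).2 fun x _ => h0 x
    simp at this
  obtain ⟨Z, hZm, hZ0, hZc⟩ := exists_null_uncountable μ hX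
  have hφ := measurableEmbedding_embeddingReal X
  set φ := embeddingReal X
  have : IsProbabilityMeasure (μ.map φ) :=
    Measure.isProbabilityMeasure_map hφ.measurable.aemeasurable
  have hν0 : ∀ x, μ.map φ {x} = 0 := by
    intro x
    rw [hφ.map_apply]
    rcases (φ ⁻¹' {x}).eq_empty_or_nonempty with h | ⟨y, hy⟩
    · rw [h]; simp
    · refine measure_mono_null ?_ (h0 y)
      intro z hz
      exact hφ.injective (hz.trans hy.symm)
  have hmap := map_cdf_eq (μ.map φ) hν0
  set F := ProbabilityTheory.cdf (μ.map φ)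
  have hFmono : Monotone F := ProbabilityTheory.monotone_cdf _
  have hFm : Measurable F := hFmono.measurable
  let G : X → ℝ := fun x => F (φ x)
  have hGm : Measurable G := hFm.comp hφ.measurable
  have hGmap : μ.map G = volume.restrict (Icc 0 1) := by
    rw [← hmap, Measure.map_map hFm hφ.measurable]; rfl
  let N : Set ℝ := {c | ∃ x y, x < y ∧ F x = c ∧ F y = c}
  have hN : N.Countable := hFmono.countable_setOfPred_two_preimages
  have hGN : μ (G ⁻¹' N) = 0 := by
    rw [← Measure.map_apply hGm hN.measurableSet, hGmap]
    exact hN.measure_zero _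
  let X1 : Set X := (Z ∪ G ⁻¹' N)ᶜ
  have hX1m : MeasurableSet X1 := (hZm.union (hGm hN.measurableSet)).compl
  have hX1n : μ X1ᶜ = 0 := by
    simp only [X1, compl_compl]
    exact measure_union_null hZ0 hGN
  have hinj : InjOn G X1 := by
    intro x hx y hy hxy
    by_contra hne
    have hne' : φ x ≠ φ y := fun h => hne (hφ.injective h)
    apply hx
    right
    rcases lt_or_gt_of_ne hne' with h | h
    · exact ⟨_, _, h, rfl, hxy.symm⟩
    · exact ⟨_, _, h, hxy.symm, rfl⟩
  have : StandardBorelSpace X1 := hX1m.standardBorel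
  have hemb : MeasurableEmbedding (X1.domRestrict G) :=
    (hGm.comp measurable_subtype_coe).measurableEmbedding (injOn_iff_injective.1 hinj)
  let Y1 : Set ℝ := range (X1.domRestrict G)
  have hY1m : MeasurableSet Y1 := hemb.measurableSet_range
  have hY1n : (volume.restrict (Icc (0:ℝ) 1)) Y1ᶜ = 0 := by
    rw [← hGmap, Measure.map_apply hGm hY1m.compl]
    refine measure_mono_null ?_ hX1n
    intro x hx hx1
    exact hx ⟨⟨x, hx1⟩, rfl⟩
  have hXc : ¬ Countable (X1ᶜ : Set X) := by
    intro h
    apply hZc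
    refine (countable_coe_iff.1 h).mono ?_
    intro x hx h
    exact h (Or.inl hx)
  have hYc : ¬ Countable (Y1ᶜ : Set ℝ) := by
    intro h
    have h1 : (Iio (0:ℝ)).Countable := by
      refine (countable_coe_iff.1 h).mono ?_
      rintro x hx ⟨y, rfl⟩
      exact absurd hx (not_lt.2 (ProbabilityTheory.cdf_nonneg _ _))
    have := h1.measure_zero volume
    simp at this
  have : StandardBorelSpace (X1ᶜ : Set X) := hX1m.compl.standardBorel
  have : StandardBorelSpace (Y1ᶜ : Set ℝ) := hY1m.compl.standardBorel
  let e1 : X1 ≃ᵐ Y1 := hemb.equivRange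
  have he1 : ∀ x, (e1 x : ℝ) = G x := fun x => congrArg Subtype.val (hemb.equivRange_apply x)
  let e2 : (X1ᶜ : Set X) ≃ᵐ (Y1ᶜ : Set ℝ) := PolishSpace.measurableEquivOfNotCountable hXc hYc
  classical
  let a : X → Bool := fun x => decide (x ∈ X1)
  let b : ℝ → Bool := fun x => decide (x ∈ Y1)
  have ha : Measurable a := measurable_to_bool (by
    have : a ⁻¹' {true} = X1 := by ext; simp [a]
    rw [this]; exact hX1m)
  have hb : Measurable b := measurable_to_bool (by
    have : b ⁻¹' {true} = Y1 := by ext; simp [b]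
    rw [this]; exact hY1m)
  have at' : a ⁻¹' {true} = X1 := by ext; simp [a]
  have bt : b ⁻¹' {true} = Y1 := by ext; simp [b]
  have af : a ⁻¹' {false} = X1ᶜ := by ext; simp [a]
  have bf : b ⁻¹' {false} = Y1ᶜ := by ext; simp [b]
  have E1 : ∃ e : (a ⁻¹' {true}) ≃ᵐ (b ⁻¹' {true}), ∀ A, MeasurableSet A →
      (volume.restrict (Icc (0:ℝ) 1)) (Subtype.val '' (e '' A)) = μ (Subtype.val '' A) := by
    rw [at', bt]
    refine ⟨e1, fun A hA => ?_⟩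
    have hm2 : MeasurableSet (Subtype.val '' (e1 '' A)) :=
      hY1m.subtype_image (e1.measurableSet_image.2 hA)
    rw [← hGmap, Measure.map_apply hGm hm2]
    have hsub : Subtype.val '' A ⊆ G ⁻¹' (Subtype.val '' (e1 '' A)) := by
      rintro _ ⟨x, hx, rfl⟩
      exact ⟨e1 x, ⟨x, hx, rfl⟩, he1 x⟩
    apply le_antisymm
    · rw [← measure_inter_add_sdiff _ hX1m]
      have : μ (G ⁻¹' (Subtype.val '' (e1 '' A)) \ X1) = 0 :=
        measure_mono_null (fun x hx => hx.2) hX1n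
      rw [this, add_zero]
      apply measure_mono
      rintro x ⟨⟨_, ⟨y, hy, rfl⟩, hxy⟩, hx1⟩
      have h2 : G y = G x := (he1 y).symm.trans hxy
      exact ⟨y, hy, hinj y.2 hx1 h2⟩
    · exact measure_mono hsub
  have E2 : ∃ e : (a ⁻¹' {false}) ≃ᵐ (b ⁻¹' {false}), ∀ A, MeasurableSet A →
      (volume.restrict (Icc (0:ℝ) 1)) (Subtype.val '' (e '' A)) = μ (Subtype.val '' A) := by
    rw [af, bf]
    refine ⟨e2, fun A hA => ?_⟩
    rw [measure_mono_null (Subtype.coe_image_subset _ _) hY1n,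
      measure_mono_null (Subtype.coe_image_subset _ _) hX1n]
  have E : ∀ i, ∃ e : (a ⁻¹' {i}) ≃ᵐ (b ⁻¹' {i}), ∀ A, MeasurableSet A →
      (volume.restrict (Icc (0:ℝ) 1)) (Subtype.val '' (e '' A)) = μ (Subtype.val '' A) := by
    rintro (_ | _)
    · exact E2
    · exact E1
  choose e he using E
  obtain ⟨τ, -, hτ⟩ := glue μ (volume.restrict (Icc (0:ℝ) 1)) a b ha hb e he
  exact ⟨τ, hτ⟩

/-- A measurable set of finite positive measure is isomorphic to the unit interval. -/
theorem iso_set_unit {X : Type*} [MeasurableSpace X] [StandardBorelSpace X] (μ : Measure X)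
    (h0 : ∀ x, μ {x} = 0) (S : Set X) (hS : MeasurableSet S) (hne : μ S ≠ 0) (hnt : μ S ≠ ⊤) :
    ∃ τ : S ≃ᵐ ℝ, ∀ A, MeasurableSet A →
      (volume.restrict (Icc (0:ℝ) 1)) (τ '' A) = (μ S)⁻¹ * μ (Subtype.val '' A) := by
  have := hS.standardBorel
  let m : Measure S := (μ S)⁻¹ • Measure.comap Subtype.val μ
  have hm : ∀ A, m A = (μ S)⁻¹ * μ (Subtype.val '' A) := by
    intro A
    simp only [m, Measure.smul_apply, smul_eq_mul, comap_subtype_coe_apply hS]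
  have : IsProbabilityMeasure m := ⟨by
    rw [hm]; simp [ENNReal.inv_mul_cancel hne hnt]⟩
  obtain ⟨τ, hτ⟩ := iso_unit m (fun x => by rw [hm]; simp [h0])
  exact ⟨τ, fun A hA => by rw [hτ A hA, hm]⟩

/-- Sets of equal finite positive measure are isomorphic. -/
theorem iso_sets {X Y : Type*} [MeasurableSpace X] [StandardBorelSpace X]
    [MeasurableSpace Y] [StandardBorelSpace Y]
    (μ : Measure X) (ν : Measure Y) (hμ0 : ∀ x, μ {x} = 0) (hν0 : ∀ x, ν {x} = 0)
    (S : Set X) (T : Set Y) (hS : MeasurableSet S) (hT : MeasurableSet T)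
    (hne : μ S ≠ 0) (hnt : μ S ≠ ⊤) (hST : ν T = μ S) :
    ∃ e : S ≃ᵐ T, ∀ A, MeasurableSet A → ν (Subtype.val '' (e '' A)) = μ (Subtype.val '' A) := by
  obtain ⟨e, he⟩ := iso_set_unit μ hμ0 S hS hne hnt
  obtain ⟨f, hf⟩ := iso_set_unit ν hν0 T hT (hST ▸ hne) (hST ▸ hnt)
  refine ⟨e.trans f.symm, fun A hA => ?_⟩
  have h1 : f '' ((e.trans f.symm) '' A) = e '' A := by
    rw [← image_comp]
    congr 1
    ext x
    simp
  have h2 := hf _ ((e.trans f.symm).measurableSet_image.2 hA)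
  rw [h1, he A hA, hST] at h2
  exact ((ENNReal.mul_right_inj (by simpa using hnt) (by simpa using hne)).1 h2).symm

end Iso

/-- **Isomorphism of Riemann sets with rectangles.** For every `l ≥ 1` there is a
measure-preserving bijection `τ_l : 𝕋 → 𝕋^∞` carrying each Riemann set `I_l(n,t)`
onto a rectangle `B_m(j_1,…,j_d)` with `m = l/n`. -/
theorem exists_measurePreserving_bijection_riemannSet_to_rect
    (μ : Measure Tinf) (hμ : IsProductLebesgue μ) (l : ℕ) (hl : 1 ≤ l) :
    ∃ τ : Circle1 → Tinf, Function.Bijective τ ∧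
      (∀ A : Set Circle1, MeasurableSet A → μ (τ '' A) = volume A) ∧
      ∀ n t : ℕ, n ∣ l → t < l / n →
        ∃ (d : ℕ) (L j : Fin d → ℕ),
          (∀ k, j k < nthPrime k.val ^ L k) ∧
          (∏ k, nthPrime k.val ^ L k) = l / n ∧
          τ '' RiemannSet l n t = Rect d L j := by
  obtain ⟨hprob, hcyl⟩ := hμ
  have hl0 : l ≠ 0 := by omega
  have hμ0 : ∀ x, μ {x} = 0 := by
    intro x
    have h := hcyl {0} (fun i => {x i}) (fun i => measurableSet_singleton _)
    rw [Finset.prod_singleton, volume_singleton_circle] at h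
    refine measure_mono_null ?_ h
    rintro y rfl i _
    rfl
  let N : ℕ → ℕ := fun k => l.factorization (nthPrime k)
  let q : ℕ → ℕ := fun k => nthPrime k ^ N k
  have hq : ∀ k, 0 < q k := fun k => pow_pos (nthPrime_prime k).pos _
  have hprod : ∏ k : Fin (l + 1), q k.val = l := prod_nthPrime hl0 dvd_rfl
  let E0 : Fin l → ∀ k : Fin (l + 1), Fin (q k) := fun s k =>
    ⟨rev (nthPrime k) (N k) s, rev_lt (nthPrime_prime _).pos _ _⟩
  have hE0 : Function.Bijective E0 := by
    rw [Fintype.bijective_iff_injective_and_card]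
    constructor
    · intro s t hst
      have h1 : (s : ℕ) ≡ t [MOD l] := by
        rw [modEq_iff_forall hl0 dvd_rfl]
        intro k
        rw [← rev_eq_iff (nthPrime_prime _).pos]
        exact congrArg Fin.val (congrFun hst k)
      have h2 := Nat.ModEq.eq_of_lt_of_lt h1 s.2 t.2
      exact Fin.ext h2
    · rw [Fintype.card_pi]
      simp [hprod]
  let E := Equiv.ofBijective E0 hE0
  let a : Circle1 → Fin l := fun x => ⟨fl l x, fl_lt hl x⟩
  let b : Tinf → Fin l := fun y => E.symm (fun k => ⟨fl (q k) (y k), fl_lt (hq k) _⟩)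
  have hbs : ∀ y s, b y = s ↔ ∀ k : Fin (l + 1), fl (q k) (y k) = rev (nthPrime k) (N k) s := by
    intro y s
    simp only [b]
    rw [Equiv.symm_apply_eq]
    constructor
    · intro h k
      exact congrArg Fin.val (congrFun h k)
    · intro h
      funext k
      exact Fin.ext (h k)
  have haset : ∀ s : Fin l, a ⁻¹' {s} = {x | fl l x = s} := by
    intro s
    ext x
    exact Fin.ext_iff
  have hbset : ∀ s : Fin l, b ⁻¹' {s} = {y | ∀ i ∈ Finset.range (l + 1),
      y i ∈ {x | fl (q i) x = rev (nthPrime i) (N i) s}} := by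
    intro s
    ext y
    refine (hbs y s).trans ?_
    constructor
    · intro h i hi
      exact h ⟨i, Finset.mem_range.1 hi⟩
    · intro h k
      exact h k (Finset.mem_range.2 k.2)
  have hA : ∀ (i : ℕ) (j : ℕ), MeasurableSet {x | fl i x = j} := fun i j =>
    measurable_fl i (measurableSet_singleton j)
  have hbm : ∀ s, MeasurableSet (b ⁻¹' {s}) := by
    intro s
    rw [hbset]
    have : {y : Tinf | ∀ i ∈ Finset.range (l + 1),
        y i ∈ {x | fl (q i) x = rev (nthPrime i) (N i) s}} = ⋂ i ∈ Finset.range (l + 1),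
        (fun y : Tinf => y i) ⁻¹' {x | fl (q i) x = rev (nthPrime i) (N i) s} := by
      ext y; simp
    rw [this]
    exact Finset.measurableSet_biInter _ fun i _ => measurable_pi_apply i (hA _ _)
  have ham : ∀ s, MeasurableSet (a ⁻¹' {s}) := by
    intro s
    rw [haset]
    exact hA _ _
  have hb : Measurable b := measurable_to_countable' hbm
  have ha : Measurable a := measurable_to_countable' ham
  have hva : ∀ s, volume (a ⁻¹' {s}) = (l : ENNReal)⁻¹ := by
    intro s
    rw [haset]
    exact volume_fl hl s.2
  have hvb : ∀ s, μ (b ⁻¹' {s}) = (l : ENNReal)⁻¹ := by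
    intro s
    rw [hbset, hcyl _ (fun i => {x | fl (q i) x = rev (nthPrime i) (N i) s}) (fun i => hA _ _)]
    have : ∀ i ∈ Finset.range (l + 1),
        volume {x | fl (q i) x = rev (nthPrime i) (N i) s} = (q i : ENNReal)⁻¹ := fun i _ =>
      volume_fl (hq i) (rev_lt (nthPrime_prime _).pos _ _)
    rw [Finset.prod_congr rfl this, ← ENNReal.prod_inv_distrib]
    · rw [← Fin.prod_univ_eq_prod_range (fun i => (q i : ENNReal)) (l + 1), ← Nat.cast_prod, hprod]
    · intro i _ j _ _
      right
      exact ENNReal.natCast_ne_top _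
  have hiso : ∀ s, ∃ e : (a ⁻¹' {s}) ≃ᵐ (b ⁻¹' {s}), ∀ A, MeasurableSet A →
      μ (Subtype.val '' (e '' A)) = volume (Subtype.val '' A) := by
    intro s
    refine iso_sets volume μ volume_singleton_circle hμ0 _ _ (ham s) (hbm s) ?_ ?_ ?_
    · rw [hva]; simp
    · rw [hva]; simpa using hl0
    · rw [hva, hvb]
  choose e he using hiso
  obtain ⟨τ, hτ, hτm⟩ := glue volume μ a b ha hb e he
  refine ⟨τ, τ.bijective, hτm, ?_⟩
  intro n t hn ht
  have hm : l / n ∣ l := Nat.div_dvd_of_dvd hn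
  refine ⟨l + 1, fun k => (l / n).factorization (nthPrime k),
    fun k => rev (nthPrime k) ((l / n).factorization (nthPrime k)) t,
    fun k => rev_lt (nthPrime_prime _).pos _ _, prod_nthPrime hl0 hm, ?_⟩
  ext y
  obtain ⟨x, rfl⟩ := τ.surjective y
  rw [τ.injective.mem_set_image, mem_riemannSet_iff hl hn ht]
  have h1 : fl l x % (l / n) = t ↔ (b (τ x) : ℕ) ≡ t [MOD l / n] := by
    rw [hτ, Nat.ModEq, Nat.mod_eq_of_lt ht]
  rw [h1, modEq_iff_forall hl0 hm]
  refine forall_congr' fun k => ?_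
  have hp := (nthPrime_prime k.val).pos
  rw [mem_circleIco_iff (pow_pos hp _) _ (rev_lt hp _ _), ← rev_eq_iff hp]
  have hle : (l / n).factorization (nthPrime k) ≤ N k :=
    (Nat.factorization_le_iff_dvd (fun h => hl0 (by rw [h] at hm; exact zero_dvd_iff.1 hm)) hl0).2 hm _
  obtain ⟨K, hK⟩ := Nat.exists_eq_add_of_le hle
  have h2 := (hbs (τ x) _).1 rfl k
  have h3 : fl (nthPrime k ^ (l / n).factorization (nthPrime k)) (τ x k)
      = rev (nthPrime k) ((l / n).factorization (nthPrime k)) (b (τ x)) := by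
    rw [← rev_div hp _ K, ← hK, ← h2, ← fl_div (pow_pos hp K), ← pow_add, ← hK]
  rw [h3]
end

section
/- Fix d ≥ 1 and distinct primes p_1, p_2, …, p_d, and let (n_k) be the increasing enumeration of the set of integers of the form p_1^{k_1} p_2^{k_2} ⋯ p_d^{k_d} with k_1, …, k_d ∈ ℕ. If an increasing function φ : ℝ⁺ → ℝ⁺ satisfies lim_{x→∞} φ(x)/(x (ln x)^{d−1}) = 0, then there exists a function f ∈ L^φ(𝕋) such that the sequence (R_{n_k} f(x))_k diverges for every x ∈ 𝕋. -/
open MeasureTheory Filter Set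

namespace RSDiv

instance probInst : IsProbabilityMeasure (volume : Measure Circle1) :=
  ⟨by rw [AddCircle.measure_univ]; simp⟩

lemma exists_shift {E W : Set Circle1} (hE : MeasurableSet E) (hW : MeasurableSet W) :
    ∃ t : Circle1, volume {x | x ∈ E ∧ x - t ∈ W} ≤ volume E * volume W := by
  have hm : Measurable (Function.uncurry fun t x : Circle1 =>
      (E.indicator (fun _ => (1 : ENNReal)) x) * (W.indicator (fun _ => (1 : ENNReal)) (x - t))) := by
    apply Measurable.mul
    · exact (measurable_const.indicator hE).comp measurable_snd
    · exact (measurable_const.indicator hW).comp (measurable_snd.sub measurable_fst)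
  obtain ⟨t, ht⟩ := exists_le_lintegral (μ := (volume : Measure Circle1)) (f := fun t => ∫⁻ x : Circle1,
      (E.indicator (fun _ => (1 : ENNReal)) x) * (W.indicator (fun _ => (1 : ENNReal)) (x - t)))
      (hm.lintegral_prod_right').aemeasurable
  refine ⟨t, ?_⟩
  rw [lintegral_lintegral_swap hm.aemeasurable] at ht
  have h1 : ∀ x : Circle1, ∫⁻ t : Circle1, (E.indicator (fun _ => (1 : ENNReal)) x) *
      (W.indicator (fun _ => (1 : ENNReal)) (x - t)) =
      (E.indicator (fun _ => (1 : ENNReal)) x) * volume W := by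
    intro x
    have hm3 : Measurable fun t : Circle1 => W.indicator (fun _ => (1 : ENNReal)) (x - t) :=
      (measurable_const.indicator hW).comp (measurable_const.sub measurable_id)
    rw [lintegral_const_mul _ hm3]
    rw [lintegral_sub_left_eq_self (fun y => W.indicator (fun _ => (1 : ENNReal)) y) x]
    rw [lintegral_indicator hW]; simp
  simp_rw [h1] at ht
  rw [lintegral_mul_const _ (measurable_const.indicator hE), lintegral_indicator hE] at ht
  simp only [lintegral_const, MeasurableSet.univ, Measure.restrict_apply, Set.univ_inter, one_mul] at ht
  refine le_trans (le_of_eq ?_) ht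
  have hm2 : MeasurableSet {x : Circle1 | x ∈ E ∧ x - t ∈ W} :=
    hE.inter (hW.preimage (measurable_id.sub measurable_const))
  rw [← lintegral_indicator_one hm2]
  congr 1
  ext x
  by_cases h1 : x ∈ E <;> by_cases h2 : x - t ∈ W <;> simp [Set.indicator, h1, h2]

lemma meas_iter {W : Set Circle1} (hW : MeasurableSet W) (T : Finset Circle1) :
    MeasurableSet {x : Circle1 | ∀ t ∈ T, x - t ∈ W} := by
  have : {x : Circle1 | ∀ t ∈ T, x - t ∈ W} = ⋂ t ∈ T, {x | x - t ∈ W} := by ext; simp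
  rw [this]
  exact Finset.measurableSet_biInter _ fun t _ =>
    hW.preimage (measurable_id.sub measurable_const)

lemma iter_shift {W : Set Circle1} (hW : MeasurableSet W) (r : ℕ) :
    ∃ T : Finset Circle1, T.card ≤ r ∧
      volume {x : Circle1 | ∀ t ∈ T, x - t ∈ W} ≤ volume W ^ r := by
  classical
  induction r with
  | zero => exact ⟨∅, by simp, by simp⟩
  | succ r ih =>
    obtain ⟨T, hT, hv⟩ := ih
    obtain ⟨t, ht⟩ := exists_shift (meas_iter hW T) hW
    refine ⟨insert t T, (Finset.card_insert_le _ _).trans (by omega), ?_⟩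
    refine le_trans (measure_mono ?_) (ht.trans ?_)
    · intro x hx
      simp only [Finset.mem_insert, forall_eq_or_imp, Set.mem_ofPred_eq] at hx ⊢
      exact ⟨hx.2, hx.1⟩
    · rw [pow_succ]; gcongr

lemma exists_nbhd (F : Finset Circle1) : ∃ U : Set Circle1, IsOpen U ∧ (0 : Circle1) ∈ U ∧
    (F : Set Circle1).PairwiseDisjoint (fun y => {x | x - y ∈ U}) := by
  obtain ⟨V, hV, hd⟩ := (F.finite_toSet).t2_separation
  refine ⟨⋂ y ∈ F, {u | u + y ∈ V y}, ?_, ?_, ?_⟩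
  · exact isOpen_biInter_finset fun y _ => (hV y).2.preimage (continuous_add_const y)
  · simp only [Set.mem_iInter, Set.mem_ofPred_eq, zero_add]
    exact fun y _ => (hV y).1
  · intro y hy z hz hyz
    refine (hd hy hz hyz).mono ?_ ?_
    · intro x hx
      simp only [Set.mem_iInter, Set.mem_ofPred_eq] at hx
      simpa using hx y hy
    · intro x hx
      simp only [Set.mem_iInter, Set.mem_ofPred_eq] at hx
      simpa using hx z hz

lemma vol_shift (U : Set Circle1) (y : Circle1) : volume {x | x - y ∈ U} = volume U := by
  simp only [sub_eq_add_neg]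
  exact measure_preimage_add_right (volume : Measure Circle1) (-y) U

lemma cover (ε : ℝ) (hε : 0 < ε) : ∃ C : ℝ, 0 < C ∧ ∀ F : Finset Circle1, F.Nonempty →
    ∃ A E : Set Circle1, MeasurableSet A ∧ MeasurableSet E ∧
      volume A ≤ ENNReal.ofReal (C / F.card) ∧ volume E ≤ ENNReal.ofReal ε ∧
      ∀ x, x ∈ E ∨ ∃ y ∈ F, x - y ∈ A := by
  obtain ⟨Λ, hΛ0, hΛ⟩ : ∃ Λ : ℝ, 0 ≤ Λ ∧ Real.exp (-Λ) ≤ ε := by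
    refine ⟨max 0 (-Real.log ε), le_max_left _ _, ?_⟩
    rw [← Real.le_log_iff_exp_le hε]
    have := le_max_right 0 (-Real.log ε)
    linarith
  refine ⟨Λ + 1, by linarith, fun F hF => ?_⟩
  obtain ⟨U, hUo, hU0, hdisj⟩ := exists_nbhd F
  have hUm := hUo.measurableSet
  set P : Set Circle1 := ⋃ y ∈ F, {x | x - y ∈ U} with hP
  have hPm : MeasurableSet P := Finset.measurableSet_biUnion _ fun y _ =>
    hUm.preimage (measurable_id.sub measurable_const)
  have hPv : volume P = F.card * volume U := by
    rw [hP, measure_biUnion_finset hdisj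
      (fun y _ => hUm.preimage (measurable_id.sub measurable_const))]
    simp only [vol_shift]
    simp
  set u : ℝ := (volume U).toReal with hu
  have hupos : 0 < u := ENNReal.toReal_pos (hUo.measure_pos _ ⟨0, hU0⟩).ne' (measure_ne_top _ _)
  have hUu : volume U = ENNReal.ofReal u := (ENNReal.ofReal_toReal (measure_ne_top _ _)).symm
  have hm : (0 : ℝ) < F.card := by exact_mod_cast hF.card_pos
  set m : ℝ := (F.card : ℝ) with hmdef
  have hPv' : volume P = ENNReal.ofReal (m * u) := by
    rw [hPv, hUu, ENNReal.ofReal_mul hm.le, hmdef, ENNReal.ofReal_natCast]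
  have hmu : m * u ≤ 1 := by
    have : volume P ≤ 1 := prob_le_one
    rw [hPv'] at this
    simpa using this
  have hmu0 : 0 < m * u := mul_pos hm hupos
  clear_value u m
  obtain ⟨T, hTc, hTv⟩ := iter_shift hPm.compl ⌈Λ / (m * u)⌉₊
  set r := ⌈Λ / (m * u)⌉₊ with hr
  have hr1 : Λ / (m * u) ≤ r := Nat.le_ceil _
  have hr2 : (r : ℝ) < Λ / (m * u) + 1 := Nat.ceil_lt_add_one (by positivity)
  refine ⟨⋃ t ∈ T, {x | x - t ∈ U}, {x | ∀ t ∈ T, x - t ∈ Pᶜ}, ?_, meas_iter hPm.compl T, ?_, ?_, ?_⟩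
  · exact Finset.measurableSet_biUnion _ fun y _ =>
      hUm.preimage (measurable_id.sub measurable_const)
  · refine (measure_biUnion_finset_le _ _).trans ?_
    simp only [vol_shift]
    rw [Finset.sum_const, nsmul_eq_mul, hUu, ← ENNReal.ofReal_natCast, ← ENNReal.ofReal_mul (Nat.cast_nonneg _)]
    apply ENNReal.ofReal_le_ofReal
    have h1 : (T.card : ℝ) ≤ r := by exact_mod_cast hTc
    calc (T.card : ℝ) * u ≤ (Λ / (m * u) + 1) * u := by gcongr; linarith
      _ = (Λ + m * u) / m := by field_simp
      _ ≤ (Λ + 1) / m := by gcongr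
  · refine hTv.trans ?_
    rw [prob_compl_eq_one_sub hPm, hPv', ← ENNReal.ofReal_one, ← ENNReal.ofReal_sub _ (by positivity),
      ← ENNReal.ofReal_pow (by linarith)]
    apply ENNReal.ofReal_le_ofReal
    refine le_trans ?_ hΛ
    calc (1 - m * u) ^ r ≤ (Real.exp (-(m * u))) ^ r := by
          exact pow_le_pow_left₀ (by linarith) (Real.one_sub_le_exp_neg _) _
      _ = Real.exp (-(r * (m * u))) := by rw [← Real.exp_nat_mul]; ring_nf
      _ ≤ Real.exp (-Λ) := by
          apply Real.exp_le_exp.2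
          rw [div_le_iff₀ (by positivity)] at hr1
          linarith
  · intro x
    by_cases hx : ∀ t ∈ T, x - t ∈ Pᶜ
    · exact Or.inl hx
    · right
      push Not at hx
      obtain ⟨t, ht, hxt⟩ := hx
      simp only [Set.mem_compl_iff, not_not, hP, Set.mem_iUnion, Set.mem_ofPred_eq] at hxt
      obtain ⟨y, hy, h⟩ := hxt
      refine ⟨y, hy, ?_⟩
      simp only [Set.mem_iUnion, Set.mem_ofPred_eq]
      exact ⟨t, ht, by rwa [sub_right_comm]⟩


lemma totient_bound {d : ℕ} (p : Fin d → ℕ) (hp : ∀ i, (p i).Prime) (e : Fin d → ℕ) :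
    ∏ i, p i ^ e i ≤ (∏ i, p i) * (∏ i, p i ^ e i).totient := by
  have h1 : ∀ s : Finset (Fin d), ∏ i ∈ s, (p i ^ e i).totient ≤ (∏ i ∈ s, p i ^ e i).totient := by
    classical
    intro s
    induction s using Finset.induction_on with
    | empty => simp
    | insert a s ha ih =>
      rw [Finset.prod_insert ha, Finset.prod_insert ha]
      exact (Nat.mul_le_mul_left _ ih).trans (Nat.totient_super_multiplicative _ _)
  refine le_trans ?_ (Nat.mul_le_mul_left _ (h1 Finset.univ))
  rw [← Finset.prod_mul_distrib]
  refine Finset.prod_le_prod' fun i _ => ?_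
  rcases Nat.eq_zero_or_pos (e i) with h | h
  · simp [h, (hp i).one_le]
  · obtain ⟨k, hk⟩ := Nat.exists_eq_succ_of_ne_zero h.ne'
    rw [hk, Nat.totient_prime_pow_succ (hp i), pow_succ]
    have := (hp i).two_le
    calc p i ^ k * p i = p i * (p i ^ k * 1) := by ring
      _ ≤ _ := by gcongr; omega

lemma exists_F {d : ℕ} (p : Fin (d + 1) → ℕ) (hp : ∀ i, (p i).Prime)
    (hpinj : Function.Injective p) (L : ℕ) :
    ∃ F : Finset Circle1, (L + 1) ^ d * (∏ i, p i) ^ L ≤ F.card * (p 0 * ∏ i, p i) ∧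
      ∀ y ∈ F, ∃ n : ℕ, (∃ e : Fin (d + 1) → ℕ, n = ∏ i, p i ^ e i) ∧ 0 < n ∧
        n ≤ (∏ i, p i) ^ L ∧ n • y = 0 := by
  classical
  set Q := ∏ i, p i with hQ
  have hQpos : 0 < Q := Finset.prod_pos fun i _ => (hp i).pos
  let P : (Fin d → Fin (L + 1)) → ℕ := fun e => ∏ i : Fin d, p i.succ ^ (e i : ℕ)
  have hPpos : ∀ e, 0 < P e := fun e => Finset.prod_pos fun i _ => pow_pos (hp _).pos _
  have hPle : ∀ e, P e ≤ Q ^ L := by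
    intro e
    have : P e ≤ (∏ i : Fin d, p i.succ) ^ L := by
      rw [← Finset.prod_pow]
      exact Finset.prod_le_prod' fun i _ =>
        Nat.pow_le_pow_right (hp _).pos (Nat.lt_succ_iff.1 (e i).2)
    refine this.trans (Nat.pow_le_pow_left ?_ _)
    rw [hQ, Fin.prod_univ_succ]
    exact Nat.le_mul_of_pos_left _ (hp 0).pos
  let a : (Fin d → Fin (L + 1)) → ℕ := fun e => Nat.log (p 0) (Q ^ L / P e)
  let ex : (Fin d → Fin (L + 1)) → Fin (d + 1) → ℕ := fun e =>
    Fin.cons (a e) (fun i => (e i : ℕ))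
  let N : (Fin d → Fin (L + 1)) → ℕ := fun e => ∏ i, p i ^ ex e i
  have hNe : ∀ e, N e = p 0 ^ a e * P e := by
    intro e
    simp only [N, P, ex, Fin.prod_univ_succ, Fin.cons_zero, Fin.cons_succ]
  have hNpos : ∀ e, 0 < N e := fun e => Finset.prod_pos fun i _ => pow_pos (hp _).pos _
  have hNle : ∀ e, N e ≤ Q ^ L := by
    intro e
    rw [hNe]
    have h0 : Q ^ L / P e ≠ 0 := (Nat.div_pos (hPle e) (hPpos e)).ne'
    exact (Nat.mul_le_mul_right _ (Nat.pow_log_le_self _ h0)).trans (Nat.div_mul_le_self _ _)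
  have hNge : ∀ e, Q ^ L ≤ p 0 * N e := by
    intro e
    rw [hNe]
    have := Nat.lt_pow_succ_log_self (hp 0).one_lt (Q ^ L / P e)
    rw [Nat.div_lt_iff_lt_mul (hPpos e), pow_succ] at this
    calc Q ^ L ≤ p 0 ^ a e * p 0 * P e := this.le
      _ = _ := by ring
  have hNinj : Function.Injective N := by
    intro e e' h
    have hfac : ∀ (e : Fin (d+1) → ℕ) (i), (∏ j, p j ^ e j).factorization (p i) = e i := by
      intro e i
      rw [Nat.factorization_prod (fun j _ => pow_ne_zero _ (hp j).ne_zero)]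
      simp only [Finsupp.coe_finsetSum, Finset.sum_apply]
      rw [Finset.sum_eq_single i]
      · rw [(hp i).factorization_pow]; simp
      · intro j _ hj
        rw [(hp j).factorization_pow, Finsupp.single_apply, if_neg]
        exact fun h => hj (hpinj h)
      · simp
    funext i
    have := hfac (ex e) i.succ
    have h2 := hfac (ex e') i.succ
    change (N e).factorization _ = _ at this
    change (N e').factorization _ = _ at h2
    rw [h, h2] at this
    simp only [ex, Fin.cons_succ] at this
    exact Fin.ext this.symm
  have hfin : ∀ e, {u : Circle1 | addOrderOf u = N e}.Finite := fun e =>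
    AddCircle.finite_setOfPred_addOrderOf_eq (1 : ℝ) (hNpos e)
  let G : (Fin d → Fin (L + 1)) → Finset Circle1 := fun e => (hfin e).toFinset
  have hGc : ∀ e, (G e).card = (N e).totient := by
    intro e
    rw [← AddCircle.card_addOrderOf_eq_totient (1 : ℝ)]
    exact (Nat.card_eq_card_finite_toFinset (hfin e)).symm
  refine ⟨Finset.univ.biUnion G, ?_, ?_⟩
  · rw [Finset.card_biUnion]
    · simp only [hGc]
      rw [Finset.sum_mul]
      calc (L + 1) ^ d * Q ^ L = ∑ e : Fin d → Fin (L + 1), Q ^ L := by simp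
        _ ≤ _ := Finset.sum_le_sum fun e _ => ?_
      calc Q ^ L ≤ p 0 * N e := hNge e
        _ ≤ p 0 * (Q * (N e).totient) := Nat.mul_le_mul_left _ (totient_bound p hp _)
        _ = _ := by ring
    · intro e _ e' _ hne
      change Disjoint (G e) (G e')
      rw [Finset.disjoint_left]
      intro y hy hy'
      simp only [G, Set.Finite.mem_toFinset, Set.mem_ofPred_eq] at hy hy'
      exact hne (hNinj (hy.symm.trans hy'))
  · intro y hy
    simp only [Finset.mem_biUnion, Finset.mem_univ, true_and, G, Set.Finite.mem_toFinset,
      Set.mem_ofPred_eq] at hy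
    obtain ⟨e, he⟩ := hy
    exact ⟨N e, ⟨ex e, rfl⟩, hNpos e, hNle e, by rw [← he]; exact addOrderOf_nsmul_eq_zero y⟩


lemma stage {d : ℕ} (p : Fin (d + 1) → ℕ) (hp : ∀ i, (p i).Prime)
    (hpinj : Function.Injective p)
    (φ : ℝ → ℝ) (hφpos : ∀ x ≥ (0:ℝ), 0 ≤ φ x)
    (hφ : Tendsto (fun x : ℝ => φ x / (x * Real.log x ^ d)) atTop (nhds 0))
    (B η : ℝ) (hB : 0 < B) (hη : 0 < η) :
    ∃ (g : Circle1 → ℝ) (c : Circle1 → ENNReal), Measurable g ∧ Measurable c ∧ (∀ x, 0 ≤ g x) ∧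
      ∫⁻ x, c x ≤ ENNReal.ofReal η ∧
      (∀ x, g x ≠ 0 → ENNReal.ofReal (φ (g x)) ≤ c x) ∧
      ∀ x, ∃ n : ℕ, (∃ e : Fin (d + 1) → ℕ, n = ∏ i, p i ^ e i) ∧ 0 < n ∧
        ∃ u : Circle1, n • u = 0 ∧ n * B ≤ g (x + u) := by
  classical
  have hφB : 0 ≤ φ B := hφpos B hB.le
  obtain ⟨C, hC, hcov⟩ := cover (η / 2 / (φ B + 1)) (by positivity)
  have hQ2 : 2 ≤ ∏ i, p i := by
    refine (hp 0).two_le.trans ?_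
    rw [Fin.prod_univ_succ]
    exact Nat.le_mul_of_pos_right _ (Finset.prod_pos fun i _ => (hp _).pos)
  have hF := exists_F p hp hpinj
  set Q := ∏ i, p i with hQ
  clear_value Q
  have hQr : (2 : ℝ) ≤ Q := by exact_mod_cast hQ2
  have hQ0 : (0 : ℝ) < Q := by linarith
  have hlogQ : 0 < Real.log Q := Real.log_pos (by linarith)
  have hp0 : (0 : ℝ) < p 0 := by exact_mod_cast (hp 0).pos
  set D := Real.log Q + |Real.log B| with hD
  have hD0 : 0 < D := by positivity
  set K := C * p 0 * Q * B * D ^ d with hK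
  have hK0 : 0 < K := by positivity
  have hXt : Tendsto (fun L : ℕ => (Q : ℝ) ^ L * B) atTop atTop :=
    (tendsto_pow_atTop_atTop_of_one_lt (by linarith)).atTop_mul_const hB
  have hη' : 0 < η / 2 / (K + 1) := by positivity
  have ev1 := (hφ.comp hXt).eventually (gt_mem_nhds hη')
  have ev2 := hXt.eventually_gt_atTop 1
  obtain ⟨L, hL1, hL2⟩ := (ev1.and ev2).exists
  simp only [Function.comp_apply] at hL1
  obtain ⟨F, hFc, hFm⟩ := hF L
  set X : ℝ := (Q : ℝ) ^ L * B with hX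
  have hX0 : 0 < X := by linarith
  have hlogX : 0 < Real.log X := Real.log_pos hL2
  have hφX : φ X ≤ η / 2 / (K + 1) * (X * Real.log X ^ d) := by
    rw [div_lt_iff₀ (by positivity)] at hL1
    exact hL1.le
  have hlogXle : Real.log X ≤ (L + 1) * D := by
    rw [hX, Real.log_mul (by positivity) hB.ne', Real.log_pow, hD]
    have h1 := le_abs_self (Real.log B)
    have h2 : 0 ≤ (L : ℝ) * |Real.log B| := by positivity
    nlinarith
  have hFc' : ((L : ℝ) + 1) ^ d * (Q : ℝ) ^ L ≤ F.card * (p 0 * Q) := by exact_mod_cast hFc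
  have hFne : F.Nonempty := by
    rw [← Finset.card_pos]
    by_contra h
    have h0 : F.card = 0 := by omega
    rw [h0] at hFc'
    have : (0 : ℝ) < ((L : ℝ) + 1) ^ d * (Q : ℝ) ^ L := by positivity
    simp at hFc'
    linarith
  have hm : (0 : ℝ) < F.card := by exact_mod_cast hFne.card_pos
  have hcost : C / F.card * φ X ≤ η / 2 := by
    calc C / F.card * φ X ≤ C / F.card * (η / 2 / (K + 1) * (X * ((L + 1) * D) ^ d)) := by
          refine mul_le_mul_of_nonneg_left (hφX.trans ?_) (by positivity)
          gcongr
      _ = (C * B * D ^ d * (η / 2 / (K + 1))) * ((((L : ℝ) + 1) ^ d * (Q : ℝ) ^ L) / F.card) := by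
          rw [hX, mul_pow]; field_simp
      _ ≤ (C * B * D ^ d * (η / 2 / (K + 1))) * (p 0 * Q) := by
          gcongr
          rw [div_le_iff₀ hm]; linarith
      _ = η / 2 * (K / (K + 1)) := by rw [hK]; field_simp
      _ ≤ η / 2 * 1 := by
          gcongr
          rw [div_le_one (by positivity)]; linarith
      _ = η / 2 := mul_one _
  obtain ⟨A, E, hA, hE, hAv, hEv, hAE⟩ := hcov F hFne
  refine ⟨A.piecewise (fun _ => X) (E.indicator fun _ => B),
    fun x => A.indicator (fun _ => ENNReal.ofReal (φ X)) x +
      E.indicator (fun _ => ENNReal.ofReal (φ B)) x, ?_, ?_, ?_, ?_, ?_, ?_⟩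
  · exact Measurable.piecewise hA measurable_const (measurable_const.indicator hE)
  · exact (measurable_const.indicator hA).add (measurable_const.indicator hE)
  · intro x
    by_cases h1 : x ∈ A <;> by_cases h2 : x ∈ E <;> simp [Set.piecewise, h1, h2, hX0.le, hB.le]
  · rw [lintegral_add_left (measurable_const.indicator hA), lintegral_indicator hA,
      lintegral_indicator hE]
    simp only [lintegral_const, MeasurableSet.univ, Measure.restrict_apply, Set.univ_inter]
    have e1 : ENNReal.ofReal (φ X) * volume A ≤ ENNReal.ofReal (η / 2) := by
      calc _ ≤ ENNReal.ofReal (φ X) * ENNReal.ofReal (C / F.card) := by gcongr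
        _ = ENNReal.ofReal (C / F.card * φ X) := by
          rw [mul_comm, ← ENNReal.ofReal_mul (by positivity)]
        _ ≤ _ := ENNReal.ofReal_le_ofReal hcost
    have e2 : ENNReal.ofReal (φ B) * volume E ≤ ENNReal.ofReal (η / 2) := by
      calc _ ≤ ENNReal.ofReal (φ B) * ENNReal.ofReal (η / 2 / (φ B + 1)) := by gcongr
        _ = ENNReal.ofReal (φ B * (η / 2 / (φ B + 1))) := by
          rw [← ENNReal.ofReal_mul hφB]
        _ ≤ _ := by
          apply ENNReal.ofReal_le_ofReal
          rw [mul_div_assoc', div_le_iff₀ (by positivity)]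
          nlinarith
    calc _ ≤ ENNReal.ofReal (η / 2) + ENNReal.ofReal (η / 2) := add_le_add e1 e2
      _ = ENNReal.ofReal η := by
        rw [← ENNReal.ofReal_add (by positivity) (by positivity), add_halves]
  · intro x hx
    by_cases h1 : x ∈ A <;> by_cases h2 : x ∈ E <;> simp_all [Set.piecewise]
  · intro x
    rcases hAE x with h | ⟨y, hy, hxy⟩
    · refine ⟨1, ⟨fun _ => 0, by simp⟩, one_pos, 0, by simp, ?_⟩
      by_cases h1 : x ∈ A
      · simp only [Nat.cast_one, one_mul, add_zero, Set.piecewise, h1, if_true]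
        rw [hX]
        exact le_mul_of_one_le_left hB.le (one_le_pow₀ (by linarith))
      · simp [Set.piecewise, h1, h]
    · obtain ⟨n, hn, hn0, hnle, hny⟩ := hFm y hy
      refine ⟨n, hn, hn0, -y, by simp [hny], ?_⟩
      rw [← sub_eq_add_neg]
      simp only [Set.piecewise, hxy, if_true]
      rw [hX]
      gcongr
      exact_mod_cast hnle

def J (q : ℕ) : Set Circle1 :=
  {x | ((AddCircle.measurableEquivIco (1 : ℝ) 0 x : Set.Ico (0 : ℝ) (0 + 1)) : ℝ) ∈
    Set.Ico (1 / (q : ℝ)) (2 / q)}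

lemma J_meas (q : ℕ) : MeasurableSet (J q) :=
  measurableSet_Ico.preimage
    (measurable_subtype_coe.comp (AddCircle.measurableEquivIco (1 : ℝ) 0).measurable)

lemma J_hit (q : ℕ) (hq : 2 ≤ q) (x : Circle1) : ∃ u : Circle1, q • u = 0 ∧ x + u ∈ J q := by
  obtain ⟨r, rfl⟩ := QuotientAddGroup.mk_surjective x
  have hq0 : (0 : ℝ) < q := by positivity
  have hq2 : (2 : ℝ) ≤ q := by exact_mod_cast hq
  refine ⟨(((1 - ⌊q * r⌋ : ℤ) / (q : ℝ) : ℝ) : Circle1), ?_, ?_⟩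
  · rw [← AddCircle.coe_nsmul, nsmul_eq_mul, mul_div_cancel₀ _ hq0.ne']
    rw [AddCircle.coe_eq_zero_iff]
    exact ⟨1 - ⌊q * r⌋, by simp⟩
  · have h1 := Int.floor_le (q * r)
    have h2 := Int.lt_floor_add_one (q * r)
    have hs1 : 1 / (q : ℝ) ≤ r + ((1 - ⌊q * r⌋ : ℤ) : ℝ) / q := by
      rw [← sub_nonneg]
      have : r + ((1 - ⌊q * r⌋ : ℤ) : ℝ) / q - 1 / q = (q * r - ⌊q * r⌋) / q := by
        push_cast; field_simp; ring
      rw [this]; apply div_nonneg _ hq0.le; linarith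
    have hs2 : r + ((1 - ⌊q * r⌋ : ℤ) : ℝ) / q < 2 / (q : ℝ) := by
      rw [← sub_pos]
      have : 2 / (q : ℝ) - (r + ((1 - ⌊q * r⌋ : ℤ) : ℝ) / q) = (⌊q * r⌋ + 1 - q * r) / q := by
        push_cast; field_simp; ring
      rw [this]; apply div_pos _ hq0; linarith
    change ((AddCircle.equivIco (1 : ℝ) 0 (((r + ((1 - ⌊q * r⌋ : ℤ) : ℝ) / q : ℝ)) : Circle1) :
      Set.Ico (0 : ℝ) (0 + 1)) : ℝ) ∈ Set.Ico (1 / (q : ℝ)) (2 / q)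
    have h0 : 0 ≤ r + ((1 - ⌊q * r⌋ : ℤ) : ℝ) / q := le_trans (by positivity) hs1
    have h1' : r + ((1 - ⌊q * r⌋ : ℤ) : ℝ) / q < 1 :=
      hs2.trans_le (by rw [div_le_one hq0]; exact hq2)
    rw [AddCircle.coe_equivIco_mk_apply, div_one, mul_one, Int.fract_eq_self.2 ⟨h0, h1'⟩]
    exact ⟨hs1, hs2⟩

lemma J_disj {P : ℕ} (hP : 2 ≤ P) {i j : ℕ} (hij : i < j) {x : Circle1}
    (hi : x ∈ J (P ^ (i + 1))) (hj : x ∈ J (P ^ (j + 1))) : False := by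
  have h1 := hi.1
  have h2 := hj.2
  have hP' : (2 : ℝ) ≤ P := by exact_mod_cast hP
  have : (2 : ℝ) / ((P ^ (j + 1) : ℕ) : ℝ) ≤ 1 / ((P ^ (i + 1) : ℕ) : ℝ) := by
    push_cast
    rw [div_le_div_iff₀ (by positivity) (by positivity), one_mul]
    calc (2 : ℝ) * P ^ (i + 1) ≤ P * P ^ (i + 1) := by gcongr
      _ = P ^ (i + 2) := by ring
      _ ≤ P ^ (j + 1) := pow_le_pow_right₀ (by linarith) (by omega)
  linarith

lemma RS_ge {f : Circle1 → ℝ} (hf : ∀ x, 0 ≤ f x) {n : ℕ} (hn : 0 < n) {u : Circle1}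
    (hu : n • u = 0) (x : Circle1) : f (x + u) / n ≤ RiemannSum n f x := by
  obtain ⟨m, hm, rfl⟩ := (AddCircle.nsmul_eq_zero_iff hn).1 hu
  rw [RiemannSum, div_eq_inv_mul, mul_one]
  gcongr
  exact Finset.single_le_sum (f := fun k : ℕ => f (x + (((k : ℝ) / (n : ℝ) : ℝ) : Circle1)))
    (fun k _ => hf _) (Finset.mem_range.2 hm)

lemma exists_div (q : ℕ) (hq : 0 < q) (y : Circle1) : ∃ z : Circle1, q • z = y := by
  obtain ⟨r, rfl⟩ := QuotientAddGroup.mk_surjective y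
  refine ⟨((r / q : ℝ) : Circle1), ?_⟩
  have hq0 : (q : ℝ) ≠ 0 := by positivity
  rw [← AddCircle.coe_nsmul, nsmul_eq_mul, mul_div_cancel₀ _ hq0]

end RSDiv

/-- **Sharpness of the class `L log^{d-1} L` (Theorem 1).** Let `(n_k)` be the increasing
enumeration of `{p_1^{k_1} ⋯ p_d^{k_d} : k_i ∈ ℕ}` for fixed distinct primes `p_1,…,p_d`.
If an increasing `φ : ℝ⁺ → ℝ⁺` satisfies `φ(x)/(x ln^{d-1} x) → 0`, then there is
`f ∈ L^φ(𝕋)` whose Riemann sums `R_{n_k} f(x)` diverge at every `x`. -/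
theorem exists_Lphi_function_riemannSums_diverge_everywhere
    (d : ℕ) (hd : 1 ≤ d) (p : Fin d → ℕ) (hp : ∀ i, (p i).Prime)
    (hpinj : Function.Injective p)
    (φ : ℝ → ℝ) (hφmono : MonotoneOn φ (Set.Ici 0)) (hφpos : ∀ x ≥ (0:ℝ), 0 ≤ φ x)
    (hφ : Tendsto (fun x : ℝ => φ x / (x * Real.log x ^ (d - 1))) atTop (nhds 0)) :
    ∃ f : Circle1 → ℝ, Measurable f ∧
      (∫⁻ x, ENNReal.ofReal (φ |f x|)) < ⊤ ∧
      ∀ x : Circle1, ¬ ∃ c : ℝ,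
        Tendsto
          (fun k => RiemannSum
            (Nat.nth (fun n => ∃ e : Fin d → ℕ, n = ∏ i, p i ^ e i) k) f x)
          atTop (nhds c) := by
  obtain ⟨d, rfl⟩ : ∃ d', d = d' + 1 := ⟨d - 1, by omega⟩
  rw [Nat.add_sub_cancel] at hφ
  classical
  have hP2 : 2 ≤ p 0 := (hp 0).two_le
  let q : ℕ → ℕ := fun j => p 0 ^ (j + 1)
  have hq2 : ∀ j, 2 ≤ q j := fun j => hP2.trans (Nat.le_self_pow (by omega) _)
  have hq0 : ∀ j, (0 : ℝ) < q j := fun j => by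
    have := hq2 j
    exact_mod_cast (by omega : 0 < q j)
  have hst := fun j : ℕ => RSDiv.stage p hp hpinj φ hφpos hφ (q j * ((j : ℝ) + 1)) ((1 / 2) ^ j)
    (mul_pos (hq0 j) (by positivity)) (by positivity)
  choose g c hgm hcm hg0 hci hgc hgx using hst
  let h : ℕ → Circle1 → ℝ := fun j => (RSDiv.J (q j)).indicator (fun x => g j (q j • x))
  have hmul : ∀ j, MeasurePreserving (fun x : Circle1 => q j • x) volume volume := fun j =>
    (AddCircle.ergodic_nsmul (hq2 j)).toMeasurePreserving
  have hhm : ∀ j, Measurable (h j) := fun j =>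
    ((hgm j).comp (hmul j).measurable).indicator (RSDiv.J_meas _)
  have hdisj : ∀ i j x, x ∈ RSDiv.J (q i) → x ∈ RSDiv.J (q j) → i = j := by
    intro i j x hi hj
    rcases lt_trichotomy i j with hlt | heq | hlt
    · exact (RSDiv.J_disj hP2 hlt hi hj).elim
    · exact heq
    · exact (RSDiv.J_disj hP2 hlt hj hi).elim
  let f : Circle1 → ℝ := fun x => (∑' j, ENNReal.ofReal (h j x)).toReal
  have hf0 : ∀ x, 0 ≤ f x := fun x => ENNReal.toReal_nonneg
  have hfJ : ∀ j x, x ∈ RSDiv.J (q j) → f x = g j (q j • x) := by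
    intro j x hx
    have h1 : h j x = g j (q j • x) := Set.indicator_of_mem hx _
    have h2 : ∑' i, ENNReal.ofReal (h i x) = ENNReal.ofReal (h j x) := by
      apply tsum_eq_single
      intro i hi
      have : h i x = 0 := Set.indicator_of_notMem (fun hxi => hi (hdisj _ _ _ hxi hx)) _
      rw [this, ENNReal.ofReal_zero]
    change (∑' i, ENNReal.ofReal (h i x)).toReal = _
    rw [h2, h1, ENNReal.toReal_ofReal (hg0 _ _)]
  have hfN : ∀ x, (∀ j, x ∉ RSDiv.J (q j)) → f x = 0 := by
    intro x hx
    have : ∀ i, ENNReal.ofReal (h i x) = 0 := by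
      intro i
      have : h i x = 0 := Set.indicator_of_notMem (hx i) _
      rw [this, ENNReal.ofReal_zero]
    simp [f, this]
  refine ⟨f, ?_, ?_, ?_⟩
  · exact (Measurable.ennreal_tsum fun j => (hhm j).ennreal_ofReal).ennreal_toReal
  · have hpt : ∀ x, ENNReal.ofReal (φ |f x|) ≤ ENNReal.ofReal (φ 0) + ∑' j, c j (q j • x) := by
      intro x
      rw [abs_of_nonneg (hf0 x)]
      by_cases hz : f x = 0
      · rw [hz]; exact le_self_add
      · by_cases hx : ∀ j, x ∉ RSDiv.J (q j)
        · exact absurd (hfN x hx) hz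
        · push Not at hx
          obtain ⟨j, hj⟩ := hx
          rw [hfJ j x hj] at hz ⊢
          exact ((hgc j _ hz).trans (ENNReal.le_tsum (f := fun j => c j (q j • x)) j)).trans
            le_add_self
    refine (lintegral_mono hpt).trans_lt ?_
    rw [lintegral_add_left measurable_const,
      lintegral_tsum (f := fun j x => c j (q j • x)) (fun j => ((hcm j).comp (hmul j).measurable).aemeasurable)]
    have h1 : ∀ j, ∫⁻ x, c j (q j • x) ≤ ENNReal.ofReal ((1 / 2) ^ j) := fun j => by
      rw [(hmul j).lintegral_comp (hcm j)]
      exact hci j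
    refine ENNReal.add_lt_top.2 ⟨by simp, (ENNReal.tsum_le_tsum h1).trans_lt ?_⟩
    rw [← ENNReal.ofReal_tsum_of_nonneg (fun j => by positivity) summable_geometric_two]
    exact ENNReal.ofReal_lt_top
  · rintro x ⟨l, hl⟩
    obtain ⟨b, hb⟩ := hl.bddAbove_range
    obtain ⟨j, hj⟩ := exists_nat_gt b
    obtain ⟨n, ⟨e, he⟩, hn0, y, hny, hgy⟩ := hgx j (q j • x)
    obtain ⟨z, hz⟩ := RSDiv.exists_div (q j) (by have := hq2 j; omega) y
    obtain ⟨u, hu, hxu⟩ := RSDiv.J_hit (q j) (hq2 j) (x + z)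
    have hS : ∃ e : Fin (d + 1) → ℕ, n * q j = ∏ i, p i ^ e i := by
      refine ⟨fun i => e i + if i = 0 then j + 1 else 0, ?_⟩
      simp only [pow_add, Finset.prod_mul_distrib]
      rw [← he]
      congr 1
      rw [Finset.prod_eq_single 0]
      · simp [q]
      · intro i _ hi
        simp [hi]
      · simp
    have hN0 : 0 < n * q j := Nat.mul_pos hn0 (by have := hq2 j; omega)
    have hzu : (n * q j) • (z + u) = 0 := by
      rw [mul_nsmul', nsmul_add, hz, hu, add_zero, hny]
    have h1 := RSDiv.RS_ge hf0 hN0 hzu x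
    rw [← add_assoc, hfJ j _ hxu] at h1
    have h2 : q j • (x + z + u) = q j • x + y := by
      rw [nsmul_add, nsmul_add, hz, hu, add_zero]
    rw [h2] at h1
    have h3 : (j : ℝ) + 1 ≤ g j (q j • x + y) / ((n * q j : ℕ) : ℝ) := by
      rw [le_div_iff₀ (by exact_mod_cast hN0)]
      refine le_trans (le_of_eq ?_) hgy
      push_cast; ring
    have h4 : RiemannSum (n * q j) f x ≤ b := by
      apply hb
      refine ⟨Nat.count (fun n => ∃ e : Fin (d + 1) → ℕ, n = ∏ i, p i ^ e i) (n * q j), ?_⟩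
      simp only
      rw [Nat.nth_count hS]
    linarith
end
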